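/- Let p be a prime, n a natural number, and λ_1 ≥ ⋯ ≥ λ_t a partition of n. Let U be the abelian p-group ℤ/p^{λ_1}ℤ ⊕ ⋯ ⊕ ℤ/p^{λ_t}ℤ and let V be the R_n-module R_n/(T^{λ_1}) ⊕ ⋯ ⊕ R_n/(T^{λ_t}), where R_n = (ℤ/pℤ)[X]/(X^n) and T is the image of X. Then there exists a bijection between: (i) the set of isomorphism classes of ℤ-bilinear multiplications μ : U × U → U satisfying p·μ(x,y) = 0 for all x,y ∈ U (two multiplications μ₁, μ₂ being isomorphic when there is an additive automorphism α of U with α(μ₁(x,y)) = μ₂(α(x),α(y)) for all x,y), and (ii) the set of isomorphism classes of R_n-bilinear multiplications ν : V × V → V satisfying T•ν(x,y) = 0 for all x,y ∈ V (with isomorphism defined via R_n-module automorphisms of V analogously). -/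

import Mathlib

open Polynomial

/-- The ring `R_n = (ℤ/pℤ)[X]/(Xⁿ)`. -/
noncomputable abbrev Rn (p n : ℕ) : Type :=
  Polynomial (ZMod p) ⧸ Ideal.span {(X : Polynomial (ZMod p)) ^ n}

/-- `T`, the image of `X` in `R_n`. -/
noncomputable def Tn (p n : ℕ) : Rn p n := Ideal.Quotient.mk _ X

/-- The abelian group `U = ℤ/p^{λ₁}ℤ ⊕ ⋯ ⊕ ℤ/p^{λ_t}ℤ`. -/
abbrev Umod (p t : ℕ) (lam : Fin t → ℕ) : Type := ∀ j : Fin t, ZMod (p ^ lam j)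

/-- The `R_n`-module `V = R_n/(T^{λ₁}) ⊕ ⋯ ⊕ R_n/(T^{λ_t})`. -/
noncomputable abbrev Vmod (p n t : ℕ) (lam : Fin t → ℕ) : Type :=
  ∀ j : Fin t, Rn p n ⧸ Submodule.span (Rn p n) {Tn p n ^ lam j}

/-- `ℤ`-bilinear (i.e. biadditive) multiplications on `U` killed by `p`. -/
def MulU (p t : ℕ) (lam : Fin t → ℕ) : Type :=
  { μ : Umod p t lam →+ Umod p t lam →+ Umod p t lam // ∀ x y, p • μ x y = 0 }

/-- `R_n`-bilinear multiplications on `V` killed by `T`. -/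
noncomputable def MulV (p n t : ℕ) (lam : Fin t → ℕ) : Type :=
  { ν : Vmod p n t lam →ₗ[Rn p n] Vmod p n t lam →ₗ[Rn p n] Vmod p n t lam //
      ∀ x y, Tn p n • ν x y = 0 }

/-- Isomorphism of multiplications on `U`, via additive automorphisms of `U`. -/
def relU (p t : ℕ) (lam : Fin t → ℕ) (μ₁ μ₂ : MulU p t lam) : Prop :=
  ∃ α : Umod p t lam ≃+ Umod p t lam, ∀ x y, α (μ₁.1 x y) = μ₂.1 (α x) (α y)

/-- Isomorphism of multiplications on `V`, via `R_n`-module automorphisms of `V`. -/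
def relV (p n t : ℕ) (lam : Fin t → ℕ) (ν₁ ν₂ : MulV p n t lam) : Prop :=
  ∃ α : Vmod p n t lam ≃ₗ[Rn p n] Vmod p n t lam, ∀ x y, α (ν₁.1 x y) = ν₂.1 (α x) (α y)

/-!
Both modules have the form `M = ⨁ i, R / (π ^ lam i)`, with `R = ℤ`, `π = p` for `U` and `R = R_n`,
`π = T` for `V`; in both cases the residue ring is `k = ℤ/pℤ`. A multiplication on `M` killed by `π`
is the same as a bilinear map `M / πM × M / πM → M[π]`, and both `M / πM` and the torsion `M[π]` are
`ι → k`. An endomorphism of `M` is given by a matrix `a` over `R` for which there is a matrix `b`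
with `a * D = D * b`, where `D` is the diagonal matrix of the `π ^ (lam i - 1)`; it acts on `M / πM`
through the reduction of `a` and on `M[π]` through that of `b`. The pairs of reductions obtained in
this way are cut out by entrywise conditions that involve only `k` and `lam`, and such a pair comes
from an automorphism exactly when its first matrix is invertible. Hence the set of isomorphism
classes depends only on `k` and `lam`.
-/

/-- `π` behaves up to its `n`-th power like a uniformizer with residue ring `k`: it generates the
kernel of a surjection `R → k`, and its powers cancel in divisibilities by `π ^ m` for `m ≤ n`. -/
structure IsTruncatedUniformizer {R : Type*} (k : Type*) [CommRing R] [CommRing k] [Algebra R k]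
    (π : R) (n : ℕ) : Prop where
  algebraMap_surjective : Function.Surjective (algebraMap R k)
  algebraMap_eq_zero_iff : ∀ a, algebraMap R k a = 0 ↔ π ∣ a
  pow_dvd_of_pow_add_dvd_mul : ∀ l m a, l + m ≤ n → π ^ (l + m) ∣ π ^ l * a → π ^ m ∣ a

/-- `P` presents `M` as a module of type `lam`, that is, as `⨁ i, R / (π ^ lam i)`, where
`1 ≤ lam i ≤ n` and `π` is a truncated uniformizer up to its `n`-th power. -/
structure IsPresentation {R ι M : Type*} (k : Type*) [CommRing R] [CommRing k] [Algebra R k]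
    [AddCommGroup M] [Module R M] (π : R) (n : ℕ) (lam : ι → ℕ) (P : (ι → R) →ₗ[R] M) : Prop
    extends IsTruncatedUniformizer k π n where
  one_le : ∀ i, 1 ≤ lam i
  le : ∀ i, lam i ≤ n
  surjective : Function.Surjective P
  map_eq_zero_iff : ∀ r, P r = 0 ↔ ∀ i, π ^ lam i ∣ r i

/-- The `R`-bilinear multiplications on `M` killed by `π`: the common form of `MulU` (over `ℤ`, with
`π = p`) and `MulV` (over `Rn p n`, with `π = Tn p n`). -/
def MulKilledBy {R : Type*} (M : Type*) [CommRing R] [AddCommGroup M] [Module R M] (π : R) :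
    Type _ :=
  { ν : M →ₗ[R] M →ₗ[R] M // ∀ x y, π • ν x y = 0 }

/-- Isomorphism of multiplications killed by `π`, via `R`-linear automorphisms of `M`. -/
def MulKilledBy.IsIsomorphic {R M : Type*} [CommRing R] [AddCommGroup M] [Module R M] {π : R}
    (ν₁ ν₂ : MulKilledBy M π) : Prop :=
  ∃ α : M ≃ₗ[R] M, ∀ x y, α (ν₁.1 x y) = ν₂.1 (α x) (α y)

/-- The entrywise conditions on a pair of matrices over the residue ring that characterise the
actions of an endomorphism of a module of type `lam` on `M / πM` and on the `π`-torsion `M[π]`. -/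
structure IsCompatiblePair {ι k : Type*} [Zero k] (lam : ι → ℕ) (A B : Matrix ι ι k) : Prop where
  left_eq_zero : ∀ i j, lam j < lam i → A i j = 0
  right_eq_zero : ∀ i j, lam i < lam j → B i j = 0
  eq_of_eq : ∀ i j, lam i = lam j → A i j = B i j

/-- Equivalence of bilinear maps `M / πM × M / πM → M[π]`, both sides being identified with
`ι → k`, under the pairs of matrices induced by automorphisms of a module of type `lam`. It depends
only on `k` and `lam`, which is what makes it comparable across base rings. -/
def BilinEquivalent {ι k : Type*} [Fintype ι] [DecidableEq ι] [CommRing k] (lam : ι → ℕ)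
    (c₁ c₂ : (ι → k) →ₗ[k] (ι → k) →ₗ[k] (ι → k)) : Prop :=
  ∃ A B : Matrix ι ι k, IsUnit A ∧ IsCompatiblePair lam A B ∧
    ∀ x y, B.mulVec (c₁ x y) = c₂ (A.mulVec x) (A.mulVec y)

/-- The diagonal matrix of the `π ^ (lam i - 1)`, which carries `ι → R` onto the vectors
representing the `π`-torsion of a module of type `lam`. -/
def socleMatrix {R ι : Type*} [CommRing R] [DecidableEq ι] (π : R) (lam : ι → ℕ) : Matrix ι ι R :=
  Matrix.diagonal fun i => π ^ (lam i - 1)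

section LinearAlgebra

variable {R : Type*} [CommRing R] {L M N : Type*} [AddCommGroup L] [AddCommGroup M]
  [AddCommGroup N] [Module R L] [Module R M] [Module R N] {π : R}

theorem exists_linearMap_comp_eq {P : L →ₗ[R] M} (hP : Function.Surjective P) (f : L →ₗ[R] N)
    (hf : LinearMap.ker P ≤ LinearMap.ker f) : ∃ g : M →ₗ[R] N, ∀ x, g (P x) = f x := by
  refine ⟨(LinearMap.ker P).liftQ f hf ∘ₗ (P.quotKerEquivOfSurjective hP).symm, fun x => ?_⟩
  have hx : (P.quotKerEquivOfSurjective hP).symm (P x) = (LinearMap.ker P).mkQ x :=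
    (LinearEquiv.symm_apply_eq _).2 rfl
  rw [LinearMap.comp_apply, LinearEquiv.coe_coe, hx, ← LinearMap.comp_apply,
    Submodule.liftQ_mkQ]

/-- Nakayama's lemma for a nilpotent action. -/
theorem surjective_of_forall_exists_eq_add_smul {n : ℕ} (hπ : ∀ x : N, π ^ n • x = 0)
    (f : M →ₗ[R] N) (hf : ∀ x, ∃ y z, x = f y + π • z) : Function.Surjective f := by
  have approx (m : ℕ) : ∀ x, ∃ y z, x = f y + π ^ m • z := by
    induction m with
    | zero => exact fun x => ⟨0, x, by simp⟩
    | succ m ih =>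
      intro x
      obtain ⟨y, z, rfl⟩ := ih x
      obtain ⟨u, v, rfl⟩ := hf z
      refine ⟨y + π ^ m • u, v, ?_⟩
      rw [map_add, map_smul, smul_add, smul_smul, ← pow_succ, add_assoc]
  intro x
  obtain ⟨y, z, rfl⟩ := approx n x
  exact ⟨y, by rw [hπ, add_zero]⟩

end LinearAlgebra

section Factorization

variable {R k M V W : Type*} [CommRing R] [CommRing k] [Algebra R k] [AddCommGroup M] [Module R M]
  [AddCommGroup V] [Module R V] [Module k V] [IsScalarTower R k V]
  [AddCommGroup W] [Module R W] [Module k W] [IsScalarTower R k W]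
  {π : R} {q : M →ₗ[R] V} {s : W →ₗ[R] M}

/-- The multiplication on `M` obtained from a bilinear map on a quotient `V` of `M` with values in a
submodule `W` of the `π`-torsion of `M`. -/
def MulKilledBy.ofBilin (q : M →ₗ[R] V) (s : W →ₗ[R] M) (hs : ∀ w, π • s w = 0)
    (c : V →ₗ[k] V →ₗ[k] W) : MulKilledBy M π :=
  ⟨((c.restrictScalars₁₂ R R).compl₁₂ q q).compr₂ s, fun _ _ => hs _⟩

theorem bilin_apply_eq_apply (hq : ∀ x, q x = 0 → ∃ y, x = π • y) {ν : M →ₗ[R] M →ₗ[R] M}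
    (hν : ∀ x y, π • ν x y = 0) {x x' y y' : M} (hx : q x = q x') (hy : q y = q y') :
    ν x y = ν x' y' := by
  obtain ⟨u, hu⟩ := hq (x - x') (by rw [map_sub, hx, sub_self])
  obtain ⟨v, hv⟩ := hq (y - y') (by rw [map_sub, hy, sub_self])
  rw [sub_eq_iff_eq_add.1 hu, sub_eq_iff_eq_add.1 hv]
  simp only [map_add, map_smul, LinearMap.add_apply, LinearMap.smul_apply, hν, zero_add]

theorem exists_bilin_comp_eq (hk : Function.Surjective (algebraMap R k))
    (hq : Function.Surjective q) (hqπ : ∀ x, q x = 0 → ∃ y, x = π • y)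
    (hs : Function.Injective s) (hsπ : ∀ x, π • x = 0 → ∃ w, s w = x)
    {ν : M →ₗ[R] M →ₗ[R] M} (hν : ∀ x y, π • ν x y = 0) :
    ∃ c : V →ₗ[k] V →ₗ[k] W, ∀ x y, s (c (q x) (q y)) = ν x y := by
  choose lift hlift using id hq
  choose c hc using fun v w => hsπ (ν (lift v) (lift w)) (hν _ _)
  have hcν (x y) : s (c (q x) (q y)) = ν x y :=
    (hc _ _).trans (bilin_apply_eq_apply hqπ hν (hlift _) (hlift _))
  refine ⟨LinearMap.mk₂ k c (hq.forall₃.2 fun x x' y => hs ?_)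
    (hk.forall.2 fun a => hq.forall₂.2 fun x y => hs ?_) (hq.forall₃.2 fun x y y' => hs ?_)
    (hk.forall.2 fun a => hq.forall₂.2 fun x y => hs ?_), hcν⟩
  · rw [← map_add q, map_add s, hcν, hcν, hcν, map_add, LinearMap.add_apply]
  · rw [algebraMap_smul, algebraMap_smul, ← map_smul q, map_smul s, hcν, hcν, map_smul,
      LinearMap.smul_apply]
  · rw [← map_add q, map_add s, hcν, hcν, hcν, map_add]
  · rw [algebraMap_smul, algebraMap_smul, ← map_smul q, map_smul s, hcν, hcν, map_smul]

theorem MulKilledBy.bijective_ofBilin (hk : Function.Surjective (algebraMap R k))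
    (hq : Function.Surjective q) (hqπ : ∀ x, q x = 0 → ∃ y, x = π • y)
    (hs : Function.Injective s) (hπs : ∀ w, π • s w = 0) (hsπ : ∀ x, π • x = 0 → ∃ w, s w = x) :
    Function.Bijective (MulKilledBy.ofBilin (k := k) q s hπs) := by
  refine ⟨fun c c' hcc' => ?_, fun ν => ?_⟩
  · refine LinearMap.ext₂ fun v w => ?_
    obtain ⟨x, rfl⟩ := hq v
    obtain ⟨y, rfl⟩ := hq w
    exact hs (LinearMap.congr_fun₂ (congrArg Subtype.val hcc') x y)
  · obtain ⟨c, hc⟩ := exists_bilin_comp_eq (k := k) hk hq hqπ hs hsπ ν.2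
    exact ⟨c, Subtype.ext (LinearMap.ext₂ hc)⟩

end Factorization

namespace IsTruncatedUniformizer

variable {R k ι : Type*} [CommRing R] [CommRing k] [Algebra R k] [Fintype ι] [DecidableEq ι]
  {π : R} {n : ℕ} {lam : ι → ℕ}

theorem dvd_of_pow_dvd_pow_pred_mul (h : IsTruncatedUniformizer k π n) {l : ℕ} (hl : 1 ≤ l)
    (hln : l ≤ n) {a : R} (ha : π ^ l ∣ π ^ (l - 1) * a) : π ∣ a := by
  have hl' : l - 1 + 1 = l := Nat.sub_add_cancel hl
  simpa only [pow_one] using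
    h.pow_dvd_of_pow_add_dvd_mul (l - 1) 1 a (hl'.trans_le hln) (by rwa [hl'])

theorem pow_pred_dvd_of_pow_dvd_mul (h : IsTruncatedUniformizer k π n) {l : ℕ} (hl : 1 ≤ l)
    (hln : l ≤ n) {a : R} (ha : π ^ l ∣ π * a) : π ^ (l - 1) ∣ a := by
  have hl' : 1 + (l - 1) = l := Nat.add_sub_cancel' hl
  exact h.pow_dvd_of_pow_add_dvd_mul 1 (l - 1) a (hl'.trans_le hln) (by rwa [hl', pow_one])

theorem isCompatiblePair_map (h : IsTruncatedUniformizer k π n) (hpos : ∀ i, 1 ≤ lam i)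
    (hle : ∀ i, lam i ≤ n) {a b : Matrix ι ι R}
    (hab : a * socleMatrix π lam = socleMatrix π lam * b) :
    IsCompatiblePair lam (a.map (algebraMap R k)) (b.map (algebraMap R k)) := by
  have entry (i j) : a i j * π ^ (lam j - 1) = π ^ (lam i - 1) * b i j := by
    simpa [socleMatrix] using congrFun₂ hab i j
  have dvd_of_dvd {i} {x : R} : π ^ lam i ∣ π ^ (lam i - 1) * x → π ∣ x :=
    h.dvd_of_pow_dvd_pow_pred_mul (hpos i) (hle i)
  refine ⟨fun i j hij => ?_, fun i j hij => ?_, fun i j hij => ?_⟩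
  · rw [Matrix.map_apply, h.algebraMap_eq_zero_iff]
    refine h.dvd_of_pow_dvd_pow_pred_mul (hpos j) (hle j) ?_
    rw [mul_comm, entry]
    exact (pow_dvd_pow π (Nat.le_sub_one_of_lt hij)).mul_right _
  · rw [Matrix.map_apply, h.algebraMap_eq_zero_iff]
    refine dvd_of_dvd (i := i) ?_
    rw [← entry]
    exact (pow_dvd_pow π (Nat.le_sub_one_of_lt hij)).mul_left _
  · rw [Matrix.map_apply, Matrix.map_apply, ← sub_eq_zero, ← map_sub, h.algebraMap_eq_zero_iff]
    refine dvd_of_dvd (i := i) ?_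
    rw [mul_sub, ← entry, hij, mul_comm, sub_self]
    exact dvd_zero _

theorem exists_map_eq_of_isCompatiblePair (h : IsTruncatedUniformizer k π n)
    (hpos : ∀ i, 1 ≤ lam i) {A B : Matrix ι ι k} (hAB : IsCompatiblePair lam A B) :
    ∃ a b : Matrix ι ι R, a.map (algebraMap R k) = A ∧ b.map (algebraMap R k) = B ∧
      a * socleMatrix π lam = socleMatrix π lam * b := by
  choose lift hlift using h.algebraMap_surjective
  have algebraMap_pow_sub_mul {i j} (hij : lam j < lam i) (x : R) :
      algebraMap R k (π ^ (lam i - lam j) * x) = 0 :=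
    (h.algebraMap_eq_zero_iff _).2 ((dvd_pow_self π (Nat.sub_ne_zero_of_lt hij)).mul_right x)
  refine ⟨Matrix.of fun i j => if lam i ≤ lam j then lift (A i j)
      else π ^ (lam i - lam j) * lift (B i j),
    Matrix.of fun i j => if lam j ≤ lam i then lift (B i j)
      else π ^ (lam j - lam i) * lift (A i j), ?_, ?_, ?_⟩
  · ext i j
    rw [Matrix.map_apply, Matrix.of_apply]
    split_ifs with hij
    · exact hlift _
    · rw [algebraMap_pow_sub_mul (not_le.1 hij), hAB.left_eq_zero i j (not_le.1 hij)]
  · ext i j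
    rw [Matrix.map_apply, Matrix.of_apply]
    split_ifs with hij
    · exact hlift _
    · rw [algebraMap_pow_sub_mul (not_le.1 hij), hAB.right_eq_zero i j (not_le.1 hij)]
  · ext i j
    rw [socleMatrix, Matrix.mul_diagonal, Matrix.diagonal_mul, Matrix.of_apply, Matrix.of_apply]
    rcases lt_trichotomy (lam i) (lam j) with hij | hij | hij
    · rw [if_pos hij.le, if_neg hij.not_ge, mul_comm, ← mul_assoc, ← pow_add,
        show lam i - 1 + (lam j - lam i) = lam j - 1 by have := hpos i; omega]
    · rw [if_pos hij.le, if_pos hij.ge, hAB.eq_of_eq i j hij, hij, mul_comm]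
    · rw [if_neg hij.not_ge, if_pos hij.le, mul_right_comm, ← pow_add,
        show lam i - lam j + (lam j - 1) = lam i - 1 by have := hpos j; omega]

end IsTruncatedUniformizer

namespace IsPresentation

variable {R k ι M : Type*} [CommRing R] [CommRing k] [Algebra R k] [AddCommGroup M] [Module R M]
  {π : R} {n : ℕ} {lam : ι → ℕ} {P : (ι → R) →ₗ[R] M}

theorem pow_smul_eq_zero (h : IsPresentation k π n lam P) (x : M) : π ^ n • x = 0 := by
  obtain ⟨r, rfl⟩ := h.surjective x
  rw [← map_smul, h.map_eq_zero_iff]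
  exact fun i => (pow_dvd_pow π (h.le i)).mul_right (r i)

theorem exists_comp_algebraMap_eq (h : IsPresentation k π n lam P) (w : ι → k) :
    ∃ r : ι → R, algebraMap R k ∘ r = w :=
  h.algebraMap_surjective.comp_left w

theorem exists_reduction (h : IsPresentation k π n lam P) :
    ∃ q : M →ₗ[R] ι → k, ∀ r, q (P r) = algebraMap R k ∘ r := by
  refine exists_linearMap_comp_eq h.surjective ((Algebra.linearMap R k).compLeft ι) fun r hr => ?_
  ext i
  exact (h.algebraMap_eq_zero_iff _).2
    ((dvd_pow_self π (Nat.one_le_iff_ne_zero.1 (h.one_le i))).trans ((h.map_eq_zero_iff r).1 hr i))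

/-- The projection of `M` onto `M / πM`, identified with `ι → k`. -/
noncomputable def reduction (h : IsPresentation k π n lam P) : M →ₗ[R] ι → k :=
  h.exists_reduction.choose

theorem reduction_map (h : IsPresentation k π n lam P) (r : ι → R) :
    h.reduction (P r) = algebraMap R k ∘ r :=
  h.exists_reduction.choose_spec r

theorem reduction_surjective (h : IsPresentation k π n lam P) :
    Function.Surjective h.reduction := by
  intro w
  obtain ⟨r, rfl⟩ := h.exists_comp_algebraMap_eq w
  exact ⟨P r, h.reduction_map r⟩

theorem exists_eq_smul_of_reduction_eq_zero (h : IsPresentation k π n lam P) (x : M)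
    (hx : h.reduction x = 0) : ∃ y, x = π • y := by
  obtain ⟨r, rfl⟩ := h.surjective x
  rw [reduction_map] at hx
  choose t ht using fun i => (h.algebraMap_eq_zero_iff (r i)).1 (congrFun hx i)
  exact ⟨P t, by rw [← map_smul]; exact congrArg P (funext ht)⟩

theorem reduction_endomorphism [Fintype ι] (h : IsPresentation k π n lam P)
    {f : M →ₗ[R] M} {a : Matrix ι ι R} (hf : ∀ r, f (P r) = P (a.mulVec r)) (x : M) :
    h.reduction (f x) = (a.map (algebraMap R k)).mulVec (h.reduction x) := by
  obtain ⟨r, rfl⟩ := h.surjective x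
  rw [hf, reduction_map, reduction_map]
  exact funext fun i => RingHom.map_mulVec (algebraMap R k) a r i

theorem bijective_of_reduction_comp_surjective [Finite ι]
    (h : IsPresentation k π n lam P) {f : M →ₗ[R] M}
    (hf : Function.Surjective (h.reduction ∘ f)) : Function.Bijective f := by
  have hsurj : Function.Surjective f := by
    refine surjective_of_forall_exists_eq_add_smul h.pow_smul_eq_zero f fun x => ?_
    obtain ⟨y, hy⟩ := hf (h.reduction x)
    obtain ⟨z, hz⟩ := h.exists_eq_smul_of_reduction_eq_zero (x - f y)
      (by rw [map_sub, sub_eq_zero]; exact hy.symm)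
    exact ⟨y, z, sub_eq_iff_eq_add'.1 hz⟩
  have : Module.Finite R M := Module.Finite.of_surjective P h.surjective
  exact ⟨OrzechProperty.injective_of_surjective_endomorphism f hsurj, hsurj⟩

variable [Fintype ι] [DecidableEq ι]

theorem smul_socleMatrix_mulVec_apply (h : IsPresentation k π n lam P) (t : ι → R) (i : ι) :
    (π • (socleMatrix π lam).mulVec t) i = π ^ lam i * t i := by
  rw [Pi.smul_apply, socleMatrix, Matrix.mulVec_diagonal, smul_eq_mul, ← mul_assoc, ← pow_succ',
    Nat.sub_add_cancel (h.one_le i)]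

theorem map_eq_zero_iff_exists (h : IsPresentation k π n lam P) (r : ι → R) :
    P r = 0 ↔ ∃ t, r = π • (socleMatrix π lam).mulVec t := by
  simp only [h.map_eq_zero_iff, funext_iff, h.smul_socleMatrix_mulVec_apply]
  exact Classical.skolem

theorem smul_map_eq_zero_iff_exists (h : IsPresentation k π n lam P) (r : ι → R) :
    π • P r = 0 ↔ ∃ t, r = (socleMatrix π lam).mulVec t := by
  constructor
  · intro hr
    rw [← map_smul, h.map_eq_zero_iff] at hr
    choose t ht using fun i => h.pow_pred_dvd_of_pow_dvd_mul (h.one_le i) (h.le i) (hr i)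
    exact ⟨t, funext fun i => by rw [socleMatrix, Matrix.mulVec_diagonal, ht]⟩
  · rintro ⟨t, rfl⟩
    rw [← map_smul]
    exact (h.map_eq_zero_iff_exists _).2 ⟨t, rfl⟩

theorem map_socleMatrix_mulVec_eq_zero_iff (h : IsPresentation k π n lam P) (r : ι → R) :
    P ((socleMatrix π lam).mulVec r) = 0 ↔ algebraMap R k ∘ r = 0 := by
  simp only [h.map_eq_zero_iff, funext_iff, Function.comp_apply, Pi.zero_apply,
    h.algebraMap_eq_zero_iff, socleMatrix, Matrix.mulVec_diagonal]
  refine forall_congr' fun i => ⟨h.dvd_of_pow_dvd_pow_pred_mul (h.one_le i) (h.le i), fun hi => ?_⟩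
  simpa only [← pow_succ, Nat.sub_add_cancel (h.one_le i)] using
    mul_dvd_mul_left (π ^ (lam i - 1)) hi

theorem exists_socle (h : IsPresentation k π n lam P) :
    ∃ s : (ι → k) →ₗ[R] M,
      ∀ r : ι → R, s (algebraMap R k ∘ r) = P ((socleMatrix π lam).mulVec r) :=
  exists_linearMap_comp_eq (P := (Algebra.linearMap R k).compLeft ι) h.exists_comp_algebraMap_eq
    (P ∘ₗ (socleMatrix π lam).mulVecLin) fun r => (h.map_socleMatrix_mulVec_eq_zero_iff r).2

/-- The embedding of `ι → k` into `M` as the `π`-torsion `M[π]`. -/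
noncomputable def socle (h : IsPresentation k π n lam P) : (ι → k) →ₗ[R] M :=
  h.exists_socle.choose

theorem socle_comp (h : IsPresentation k π n lam P) (r : ι → R) :
    h.socle (algebraMap R k ∘ r) = P ((socleMatrix π lam).mulVec r) :=
  h.exists_socle.choose_spec r

theorem socle_injective (h : IsPresentation k π n lam P) : Function.Injective h.socle := by
  rw [injective_iff_map_eq_zero]
  intro w hw
  obtain ⟨r, rfl⟩ := h.exists_comp_algebraMap_eq w
  rwa [socle_comp, map_socleMatrix_mulVec_eq_zero_iff h] at hw

theorem smul_socle (h : IsPresentation k π n lam P) (w : ι → k) : π • h.socle w = 0 := by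
  obtain ⟨r, rfl⟩ := h.exists_comp_algebraMap_eq w
  rw [socle_comp, h.smul_map_eq_zero_iff_exists]
  exact ⟨r, rfl⟩

theorem exists_socle_eq (h : IsPresentation k π n lam P) (x : M) (hx : π • x = 0) :
    ∃ w, h.socle w = x := by
  obtain ⟨r, rfl⟩ := h.surjective x
  obtain ⟨t, rfl⟩ := (h.smul_map_eq_zero_iff_exists r).1 hx
  exact ⟨algebraMap R k ∘ t, h.socle_comp t⟩

theorem exists_matrix_of_endomorphism (h : IsPresentation k π n lam P) (f : M →ₗ[R] M) :
    ∃ a b : Matrix ι ι R, a * socleMatrix π lam = socleMatrix π lam * b ∧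
      ∀ r, f (P r) = P (a.mulVec r) := by
  choose col hcol using fun j => h.surjective (f (P (Pi.single j 1)))
  let a : Matrix ι ι R := (Matrix.of col).transpose
  have hcomp : f ∘ₗ P = P ∘ₗ a.mulVecLin := LinearMap.pi_ext' fun j => LinearMap.ext_ring <| by
    simp only [LinearMap.comp_apply, LinearMap.single_apply, Matrix.mulVecLin_apply,
      Matrix.mulVec_single_one, ← hcol]
    rfl
  have hfa (r) : f (P r) = P (a.mulVec r) := LinearMap.congr_fun hcomp r
  have torsion (j) : π • P (a.mulVec ((socleMatrix π lam).mulVec (Pi.single j 1))) = 0 := by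
    rw [← hfa, ← map_smul, (h.smul_map_eq_zero_iff_exists _).2 ⟨_, rfl⟩, map_zero]
  choose colb hcolb using fun j => (h.smul_map_eq_zero_iff_exists _).1 (torsion j)
  refine ⟨a, (Matrix.of colb).transpose, Matrix.ext_of_mulVec_single fun j => ?_, hfa⟩
  rw [← Matrix.mulVec_mulVec, hcolb, ← Matrix.mulVec_mulVec, Matrix.mulVec_single_one]
  rfl

theorem exists_endomorphism_of_matrix (h : IsPresentation k π n lam P) {a b : Matrix ι ι R}
    (hab : a * socleMatrix π lam = socleMatrix π lam * b) :
    ∃ f : M →ₗ[R] M, ∀ r, f (P r) = P (a.mulVec r) := by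
  refine exists_linearMap_comp_eq h.surjective (P ∘ₗ a.mulVecLin) fun r hr => ?_
  obtain ⟨t, rfl⟩ := (h.map_eq_zero_iff_exists r).1 hr
  refine (h.map_eq_zero_iff_exists _).2 ⟨b.mulVec t, ?_⟩
  rw [Matrix.mulVecLin_apply, Matrix.mulVec_smul, Matrix.mulVec_mulVec, hab, Matrix.mulVec_mulVec]

theorem endomorphism_socle (h : IsPresentation k π n lam P) {f : M →ₗ[R] M}
    {a b : Matrix ι ι R} (hab : a * socleMatrix π lam = socleMatrix π lam * b)
    (hf : ∀ r, f (P r) = P (a.mulVec r)) (w : ι → k) :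
    f (h.socle w) = h.socle ((b.map (algebraMap R k)).mulVec w) := by
  obtain ⟨r, rfl⟩ := h.exists_comp_algebraMap_eq w
  have hbr : (b.map (algebraMap R k)).mulVec (algebraMap R k ∘ r) = algebraMap R k ∘ b.mulVec r :=
    funext fun i => (RingHom.map_mulVec (algebraMap R k) b r i).symm
  rw [hbr, socle_comp, socle_comp, hf, Matrix.mulVec_mulVec, Matrix.mulVec_mulVec, hab]

theorem exists_isCompatiblePair (h : IsPresentation k π n lam P) (α : M ≃ₗ[R] M) :
    ∃ A B : Matrix ι ι k, IsUnit A ∧ IsCompatiblePair lam A B ∧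
      (∀ x, h.reduction (α x) = A.mulVec (h.reduction x)) ∧
      ∀ w, α (h.socle w) = h.socle (B.mulVec w) := by
  obtain ⟨a, b, hab, hα⟩ := h.exists_matrix_of_endomorphism α.toLinearMap
  have hred := h.reduction_endomorphism hα
  refine ⟨a.map (algebraMap R k), b.map (algebraMap R k), ?_,
    h.isCompatiblePair_map h.one_le h.le hab, hred, h.endomorphism_socle hab hα⟩
  rw [← Matrix.mulVec_surjective_iff_isUnit]
  refine Function.Surjective.of_comp (g := h.reduction) ?_
  have hcomp : (a.map (algebraMap R k)).mulVec ∘ h.reduction = h.reduction ∘ α :=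
    (funext hred).symm
  rw [hcomp]
  exact h.reduction_surjective.comp α.surjective

theorem exists_automorphism (h : IsPresentation k π n lam P) {A B : Matrix ι ι k}
    (hA : IsUnit A) (hAB : IsCompatiblePair lam A B) :
    ∃ α : M ≃ₗ[R] M, (∀ x, h.reduction (α x) = A.mulVec (h.reduction x)) ∧
      ∀ w, α (h.socle w) = h.socle (B.mulVec w) := by
  obtain ⟨a, b, rfl, rfl, hab⟩ := h.exists_map_eq_of_isCompatiblePair h.one_le hAB
  obtain ⟨f, hf⟩ := h.exists_endomorphism_of_matrix hab
  have hred := h.reduction_endomorphism hf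
  have hbij : Function.Bijective f := by
    refine h.bijective_of_reduction_comp_surjective ?_
    rw [show h.reduction ∘ f = _ from funext hred]
    exact (Matrix.mulVec_surjective_iff_isUnit.2 hA).comp h.reduction_surjective
  exact ⟨LinearEquiv.ofBijective f hbij, hred, h.endomorphism_socle hab hf⟩

/-- Multiplications killed by `π` are the bilinear maps `M / πM × M / πM → M[π]`. -/
noncomputable def bilinEquiv (h : IsPresentation k π n lam P) :
    ((ι → k) →ₗ[k] (ι → k) →ₗ[k] (ι → k)) ≃ MulKilledBy M π :=
  Equiv.ofBijective (MulKilledBy.ofBilin h.reduction h.socle h.smul_socle)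
    (MulKilledBy.bijective_ofBilin h.algebraMap_surjective h.reduction_surjective
      h.exists_eq_smul_of_reduction_eq_zero h.socle_injective h.smul_socle h.exists_socle_eq)

theorem bilinEquiv_apply (h : IsPresentation k π n lam P)
    (c : (ι → k) →ₗ[k] (ι → k) →ₗ[k] (ι → k)) (x y : M) :
    (h.bilinEquiv c).1 x y = h.socle (c (h.reduction x) (h.reduction y)) :=
  rfl

theorem bilinEquivalent_iff (h : IsPresentation k π n lam P)
    (c₁ c₂ : (ι → k) →ₗ[k] (ι → k) →ₗ[k] (ι → k)) :
    BilinEquivalent lam c₁ c₂ ↔ (h.bilinEquiv c₁).IsIsomorphic (h.bilinEquiv c₂) := by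
  constructor
  · rintro ⟨A, B, hA, hAB, hc⟩
    obtain ⟨α, hred, hsoc⟩ := h.exists_automorphism hA hAB
    refine ⟨α, fun x y => ?_⟩
    rw [bilinEquiv_apply, bilinEquiv_apply, hsoc, hred, hred, hc]
  · rintro ⟨α, hα⟩
    obtain ⟨A, B, hA, hAB, hred, hsoc⟩ := h.exists_isCompatiblePair α
    refine ⟨A, B, hA, hAB, h.reduction_surjective.forall₂.2 fun x y => h.socle_injective ?_⟩
    rw [← hsoc, ← hred, ← hred, ← bilinEquiv_apply, hα, bilinEquiv_apply]

/-- The right-hand side depends on `R` and `M` only through `k` and `lam`. -/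
noncomputable def quotEquiv (h : IsPresentation k π n lam P) :
    Quot (MulKilledBy.IsIsomorphic (M := M) (π := π)) ≃ Quot (BilinEquivalent (k := k) lam) :=
  (Quot.congr h.bilinEquiv h.bilinEquivalent_iff).symm

end IsPresentation

section Cyclic

variable {R k ι : Type*} [CommRing R] [CommRing k] [Algebra R k] {π : R} {n : ℕ}
  {lam : ι → ℕ} {N : ι → Type*} [∀ i, AddCommGroup (N i)] [∀ i, Module R (N i)]

theorem IsTruncatedUniformizer.isPresentation_piMap (h : IsTruncatedUniformizer k π n)
    (hpos : ∀ i, 1 ≤ lam i) (hle : ∀ i, lam i ≤ n) (f : ∀ i, R →ₗ[R] N i)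
    (hf : ∀ i, Function.Surjective (f i)) (hker : ∀ i a, f i a = 0 ↔ π ^ lam i ∣ a) :
    IsPresentation k π n lam (LinearMap.piMap f) where
  toIsTruncatedUniformizer := h
  one_le := hpos
  le := hle
  surjective := Function.Surjective.piMap hf
  map_eq_zero_iff r := funext_iff.trans (forall_congr' fun i => hker i (r i))

theorem IsTruncatedUniformizer.isPresentation_mkQ (h : IsTruncatedUniformizer k π n)
    (hpos : ∀ i, 1 ≤ lam i) (hle : ∀ i, lam i ≤ n) :
    IsPresentation k π n lam
      (LinearMap.piMap fun i => (Submodule.span R {π ^ lam i}).mkQ) :=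
  h.isPresentation_piMap hpos hle _ (fun _ => Submodule.mkQ_surjective _) fun _ _ =>
    (Submodule.Quotient.mk_eq_zero _).trans Ideal.mem_span_singleton

end Cyclic

section Integers

theorem isTruncatedUniformizer_natCast {p : ℕ} (hp : p ≠ 0) (n : ℕ) :
    IsTruncatedUniformizer (ZMod p) (p : ℤ) n where
  algebraMap_surjective := ZMod.ringHom_surjective _
  algebraMap_eq_zero_iff a := ZMod.intCast_zmod_eq_zero_iff_dvd a p
  pow_dvd_of_pow_add_dvd_mul l m a _ ha := by
    rw [pow_add] at ha
    exact (mul_dvd_mul_iff_left (pow_ne_zero l (Nat.cast_ne_zero.2 hp))).1 ha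

theorem isPresentation_umod {p n t : ℕ} (hp : p ≠ 0) {lam : Fin t → ℕ} (hpos : ∀ j, 1 ≤ lam j)
    (hle : ∀ j, lam j ≤ n) :
    IsPresentation (M := Umod p t lam) (ZMod p) (p : ℤ) n lam
      (LinearMap.piMap fun j => Algebra.linearMap ℤ (ZMod (p ^ lam j))) := by
  refine (isTruncatedUniformizer_natCast hp n).isPresentation_piMap hpos hle _
    (fun _ => ZMod.intCast_surjective) fun j a => ?_
  rw [← Nat.cast_pow]
  exact ZMod.intCast_zmod_eq_zero_iff_dvd a (p ^ lam j)

/-- Biadditive maps are `ℤ`-bilinear maps. -/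
def mulUEquiv (p t : ℕ) (lam : Fin t → ℕ) :
    MulU p t lam ≃ MulKilledBy (Umod p t lam) (p : ℤ) where
  toFun μ :=
    ⟨((addMonoidHomLequivInt ℤ).toAddMonoidHom.comp μ.1).toIntLinearMap, fun x y =>
      (natCast_zsmul _ _).trans (μ.2 x y)⟩
  invFun ν :=
    ⟨LinearMap.toAddMonoidHom'.comp ν.1.toAddMonoidHom, fun x y =>
      (natCast_zsmul _ _).symm.trans (ν.2 x y)⟩
  left_inv _ := rfl
  right_inv _ := rfl

theorem relU_iff {p t : ℕ} {lam : Fin t → ℕ} (μ₁ μ₂ : MulU p t lam) :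
    relU p t lam μ₁ μ₂ ↔ (mulUEquiv p t lam μ₁).IsIsomorphic (mulUEquiv p t lam μ₂) :=
  ⟨fun ⟨α, hα⟩ => ⟨α.toIntLinearEquiv, hα⟩, fun ⟨α, hα⟩ => ⟨α.toAddEquiv, hα⟩⟩

end Integers

section TruncatedPolynomials

/-- The residue map `Rn p n → ℤ/pℤ`, taking the constant coefficient. -/
noncomputable instance Rn.algebraZMod (p n : ℕ) [NeZero n] : Algebra (Rn p n) (ZMod p) :=
  (Ideal.Quotient.lift (Ideal.span {(X : (ZMod p)[X]) ^ n}) constantCoeff fun f hf => by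
    obtain ⟨g, rfl⟩ := Ideal.mem_span_singleton.1 hf
    rw [map_mul, map_pow, constantCoeff_apply, coeff_X_zero, zero_pow (NeZero.ne n),
      zero_mul]).toAlgebra

theorem Rn.algebraMap_mk {p n : ℕ} [NeZero n] (f : (ZMod p)[X]) :
    algebraMap (Rn p n) (ZMod p) (Ideal.Quotient.mk _ f) = f.coeff 0 :=
  rfl

theorem Tn_pow_dvd_mk_iff {p n m : ℕ} (hm : m ≤ n) (f : (ZMod p)[X]) :
    Tn p n ^ m ∣ (Ideal.Quotient.mk _ f : Rn p n) ↔ X ^ m ∣ f := by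
  constructor
  · rintro ⟨g, hg⟩
    obtain ⟨g, rfl⟩ := Ideal.Quotient.mk_surjective g
    rw [Tn, ← map_pow, ← map_mul, Ideal.Quotient.eq, Ideal.mem_span_singleton] at hg
    exact (dvd_sub_left (dvd_mul_right _ g)).1 ((pow_dvd_pow X hm).trans hg)
  · rintro ⟨g, rfl⟩
    rw [map_mul, map_pow]
    exact dvd_mul_right _ _

theorem isTruncatedUniformizer_Tn (p n : ℕ) [NeZero n] :
    IsTruncatedUniformizer (ZMod p) (Tn p n) n where
  algebraMap_surjective a := ⟨Ideal.Quotient.mk _ (C a), by rw [Rn.algebraMap_mk, coeff_C_zero]⟩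
  algebraMap_eq_zero_iff a := by
    obtain ⟨f, rfl⟩ := Ideal.Quotient.mk_surjective a
    rw [Rn.algebraMap_mk, ← X_dvd_iff, ← pow_one (Tn p n), Tn_pow_dvd_mk_iff NeZero.one_le, pow_one]
  pow_dvd_of_pow_add_dvd_mul l m a hlm ha := by
    obtain ⟨f, rfl⟩ := Ideal.Quotient.mk_surjective a
    rw [Tn_pow_dvd_mk_iff (by omega)]
    have hf : X ^ (l + m) ∣ X ^ l * f := by
      rw [← Tn_pow_dvd_mk_iff hlm, map_mul, map_pow]
      exact ha
    obtain ⟨g, hg⟩ := hf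
    exact ⟨g, (monic_X_pow l).isRegular.left (by simpa only [pow_add, mul_assoc] using hg)⟩

end TruncatedPolynomials

instance MulU.uniqueOfIsEmpty (p : ℕ) {t : ℕ} [IsEmpty (Fin t)] (lam : Fin t → ℕ) :
    Unique (MulU p t lam) where
  default := ⟨0, fun _ _ => Subsingleton.elim _ _⟩
  uniq _ := Subtype.ext (Subsingleton.elim _ _)

noncomputable instance MulV.uniqueOfIsEmpty (p n : ℕ) {t : ℕ} [IsEmpty (Fin t)] (lam : Fin t → ℕ) :
    Unique (MulV p n t lam) where
  default := ⟨0, fun _ _ => Subsingleton.elim _ _⟩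
  uniq _ := Subtype.ext (Subsingleton.elim _ _)

theorem mult_correspondence_general (p n t : ℕ) (hp : p ≠ 0) (lam : Fin t → ℕ)
    (hpos : ∀ j, 1 ≤ lam j) (hle : ∀ j, lam j ≤ n) :
    Nonempty (Quot (relU p t lam) ≃ Quot (relV p n t lam)) := by
  cases isEmpty_or_nonempty (Fin t) with
  | inl _ => exact ⟨Equiv.ofUnique _ _⟩
  | inr h =>
    have : NeZero n := ⟨(Nat.lt_of_lt_of_le (hpos h.some) (hle h.some)).ne'⟩
    exact ⟨(Quot.congr (mulUEquiv p t lam) relU_iff).trans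
      ((isPresentation_umod hp hpos hle).quotEquiv.trans
        ((isTruncatedUniformizer_Tn p n).isPresentation_mkQ hpos hle).quotEquiv.symm)⟩

/-- For a partition `λ₁ ≥ ⋯ ≥ λ_t` of `n`, there is a bijection between isomorphism classes of
biadditive multiplications on `U` killed by `p` and isomorphism classes of `R_n`-bilinear
multiplications on `V` killed by `T`. -/
theorem mult_correspondence (p n t : ℕ) (hp : p.Prime) (lam : Fin t → ℕ)
    (hmono : Antitone lam) (hpos : ∀ j, 1 ≤ lam j) (hsum : ∑ j, lam j = n) :
    Nonempty (Quot (relU p t lam) ≃ Quot (relV p n t lam)) :=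
  mult_correspondence_general p n t hp.ne_zero lam hpos fun j =>
    (Finset.single_le_sum (fun _ _ => Nat.zero_le _) (Finset.mem_univ j)).trans_eq hsum
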